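/- Let E and F be Dedekind complete vector lattices and let T : E → F be a dominated linear operator, i.e. there exists a positive linear operator S : E → F with |Tx| ≤ S(|x|) for all x ∈ E. Then T has an exact (least) dominant ⟦T⟧: a positive linear operator ⟦T⟧ : E → F with |Tx| ≤ ⟦T⟧(|x|) for all x, such that ⟦T⟧ ≤ S' for every positive linear operator S' with |Tx| ≤ S'(|x|) for all x. Moreover, for every e ∈ E with e ≥ 0, ⟦T⟧(e) is the least upper bound in F of the set of all finite sums Σᵢ₌₁ⁿ |Tvᵢ| taken over all finite families v₁, …, vₙ ∈ E such that |v₁|, …, |vₙ| are pairwise disjoint and Σᵢ₌₁ⁿ |vᵢ| = e. -/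

import Mathlib

/-!
The exact dominant is the modulus of `T`: its value at `0 ≤ e` is the supremum of `T u` over
`|u| ≤ e`. It is additive because order intervals of a vector lattice add up to order intervals
(the Riesz decomposition property), and it lies below every dominant since `T u ≤ S |u| ≤ S e`.

For the formula with disjoint families it is enough that this supremum is not lowered when `u` is
restricted to the signs of `e`, i.e. to `|u| = e`. If `|u| ≤ e`, then principal projections allow
one to subtract from `n • u` greedily `n` signs of `e`, keeping the error bounded by `e`. So
`n • T u` exceeds a sum of `n` values at signs by at most the modulus at `e`; as `n` grows, the
Archimedean property removes the error.
-/

open Set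
open scoped Pointwise

section Disjointness

variable {E : Type*} [Lattice E] [AddCommGroup E] [AddLeftMono E] {a b c y : E}

theorem add_eq_sup_of_inf_eq_zero (h : a ⊓ b = 0) : a + b = a ⊔ b := by
  rw [← inf_add_sup, h, zero_add]

theorem abs_sub_eq_add_of_inf_eq_zero (h : a ⊓ b = 0) : |a - b| = a + b := by
  rw [abs_sub_comm, ← sup_sub_inf_eq_abs_sub, h, sub_zero, add_eq_sup_of_inf_eq_zero h]

theorem le_of_le_add_of_inf_eq_zero (hb : 0 ≤ b) (h : a ⊓ c = 0) (habc : a ≤ b + c) : a ≤ b := by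
  have : a - b ≤ a ⊓ c := le_inf (sub_le_self a hb) (sub_le_iff_le_add'.mpr habc)
  rwa [h, sub_nonpos] at this

theorem add_inf_eq_zero (ha : a ⊓ y = 0) (hb : b ⊓ y = 0) : (a + b) ⊓ y = 0 := by
  have ha₀ : 0 ≤ a := ha ▸ inf_le_left
  have hb₀ : 0 ≤ b := hb ▸ inf_le_left
  have hy₀ : 0 ≤ y := ha ▸ inf_le_right
  have hnonneg : 0 ≤ (a + b) ⊓ y := le_inf (add_nonneg ha₀ hb₀) hy₀
  have hdisj : (a + b) ⊓ y ⊓ b = 0 :=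
    le_antisymm ((inf_le_inf_right b inf_le_right).trans_eq (by rw [inf_comm, hb]))
      (le_inf hnonneg hb₀)
  have hle : (a + b) ⊓ y ≤ a := le_of_le_add_of_inf_eq_zero ha₀ hdisj inf_le_left
  exact le_antisymm ((le_inf hle inf_le_right).trans_eq ha) hnonneg

theorem inf_eq_zero_of_isLUB {A : Set E} (hA : A.Nonempty) (ha : IsLUB A a)
    (h : ∀ z ∈ A, z ⊓ y = 0) : a ⊓ y = 0 := by
  obtain ⟨z₀, hz₀⟩ := hA
  have hz₀a : 0 ≤ a ⊓ y := (h z₀ hz₀).symm.le.trans (inf_le_inf_right y (ha.1 hz₀))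
  have hle : a ≤ a - a ⊓ y := ha.2 fun z hz ↦ by
    have hdisj : z ⊓ (a ⊓ y) = 0 := by
      rw [inf_left_comm, h z hz, inf_eq_right]
      exact hz₀a.trans inf_le_left
    rw [le_sub_iff_add_le, add_eq_sup_of_inf_eq_zero hdisj]
    exact sup_le (ha.1 hz) inf_le_left
  exact le_antisymm (by simpa using hle) hz₀a

end Disjointness

section OrderIntervals

variable {E : Type*} [Lattice E] [AddCommGroup E] [AddLeftMono E]

theorem abs_le_iff_mem_Icc {u e : E} : |u| ≤ e ↔ u ∈ Icc (-e) e := by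
  rw [abs_le', mem_Icc, neg_le, and_comm]

theorem Icc_add_Icc_eq {a b c d : E} (hab : a ≤ b) (hcd : c ≤ d) :
    Icc a b + Icc c d = Icc (a + c) (b + d) := by
  refine (Icc_add_Icc_subset a b c d).antisymm fun x hx ↦ ?_
  refine ⟨a ⊔ (x - d), ⟨le_sup_left, sup_le hab (sub_le_iff_le_add.mpr hx.2)⟩,
    x - a ⊔ (x - d), ⟨?_, sub_le_comm.mp le_sup_right⟩, add_sub_cancel _ _⟩
  exact le_sub_comm.mp (sup_le (le_sub_iff_add_le.mpr hx.1) (sub_le_sub_left hcd x))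

end OrderIntervals

theorem smul_Icc_of_pos {𝕜 α : Type*} [GroupWithZero 𝕜] [Preorder 𝕜] [Preorder α]
    [MulAction 𝕜 α] [PosSMulMono 𝕜 α] [PosSMulReflectLE 𝕜 α] {c : 𝕜} (hc : 0 < c) (a b : α) :
    c • Icc a b = Icc (c • a) (c • b) :=
  (OrderIso.smulRight hc).image_Icc a b

/-- Dedekind completeness of an ordered type, in the form in which it is assumed of vector
lattices: no supremum of the empty set is required. -/
def DedekindComplete (E : Type*) [Preorder E] : Prop :=
  ∀ S : Set E, S.Nonempty → BddAbove S → ∃ a : E, IsLUB S a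

/-- The principal projection property of a vector lattice, expressed on the positive cone: every
`e ≥ 0` splits into a part `p` disjoint from everything disjoint from `x`, and a part `e - p`
disjoint from `x`. -/
def HasPrincipalProjections (E : Type*) [Lattice E] [AddCommGroup E] : Prop :=
  ∀ x e : E, 0 ≤ x → 0 ≤ e →
    ∃ p ∈ Icc 0 e, (∀ y, x ⊓ y = 0 → p ⊓ y = 0) ∧ x ⊓ (e - p) = 0

section Completeness

variable {E : Type*} [Lattice E] [AddCommGroup E] [AddLeftMono E]

theorem DedekindComplete.nonpos_of_forall_nsmul_le (hE : DedekindComplete E) {a c : E}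
    (h : ∀ n : ℕ, n • a ≤ c) : a ≤ 0 := by
  obtain ⟨s, hs⟩ := hE (range fun n : ℕ ↦ n • a) (range_nonempty _) ⟨c, forall_mem_range.mpr h⟩
  have : s ≤ s - a := hs.2 <| forall_mem_range.mpr fun n ↦ by
    rw [le_sub_iff_add_le, ← succ_nsmul]
    exact hs.1 (mem_range_self (n + 1))
  simpa using this

theorem DedekindComplete.hasPrincipalProjections (hE : DedekindComplete E) :
    HasPrincipalProjections E := by
  intro x e hx he
  let A : Set E := {z ∈ Icc 0 e | ∀ y, x ⊓ y = 0 → z ⊓ y = 0}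
  have hA : A.Nonempty := ⟨0, ⟨le_rfl, he⟩, fun y hy ↦ inf_eq_left.mpr (hy ▸ inf_le_right)⟩
  obtain ⟨p, hp⟩ := hE A hA ⟨e, fun z hz ↦ hz.1.2⟩
  have hpe : p ≤ e := hp.2 fun z hz ↦ hz.1.2
  have hp₀ : 0 ≤ p := hA.elim fun z hz ↦ hz.1.1.trans (hp.1 hz)
  refine ⟨p, ⟨hp₀, hpe⟩, fun y hy ↦ inf_eq_zero_of_isLUB hA hp fun z hz ↦ hz.2 y hy, ?_⟩
  have hw : 0 ≤ x ⊓ (e - p) := le_inf hx (sub_nonneg.mpr hpe)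
  -- Adding `x ⊓ (e - p)` to an element of `A` does not leave `A`.
  have hle : p ≤ p - x ⊓ (e - p) := hp.2 fun z hz ↦ by
    rw [le_sub_iff_add_le]
    refine hp.1 ⟨⟨add_nonneg hz.1.1 hw, ?_⟩, fun y hy ↦ add_inf_eq_zero (hz.2 y hy) ?_⟩
    · exact (add_le_add (hp.1 hz) inf_le_right).trans_eq (add_sub_cancel p e)
    · have hy₀ : 0 ≤ y := hy ▸ inf_le_right
      exact le_antisymm ((inf_le_inf_right y inf_le_left).trans_eq hy) (le_inf hw hy₀)
  exact le_antisymm (by simpa using hle) hw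

end Completeness

section Signs

variable {E : Type*} [Lattice E] [AddCommGroup E] [AddLeftMono E]

theorem HasPrincipalProjections.exists_abs_eq_abs_sub_le (hE : HasPrincipalProjections E)
    {w e : E} (he : 0 ≤ e) (hw : |w| ≤ e + e) : ∃ v, |v| = e ∧ |w - v| ≤ e := by
  obtain ⟨p, ⟨hp₀, hpe⟩, hp, hq⟩ := hE w⁺ e (posPart_nonneg w) he
  obtain ⟨q, rfl⟩ : ∃ q, e = p + q := ⟨e - p, (add_sub_cancel p e).symm⟩
  rw [add_sub_cancel_left] at hq
  have hq₀ : 0 ≤ q := hq ▸ inf_le_right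
  have hwp : w⁻ ⊓ p = 0 := by rw [inf_comm, hp _ (posPart_inf_negPart_eq_zero w)]
  have add_le_of_disjoint {x a b : E} (ha : 0 ≤ a) (hb : 0 ≤ b) (hxb : x ⊓ b = 0)
      (hx : x ≤ a + b + (a + b)) : x + b ≤ a + b + a := by
    have hab : 0 ≤ a + b := add_nonneg ha hb
    rw [add_eq_sup_of_inf_eq_zero hxb]
    refine sup_le (le_of_le_add_of_inf_eq_zero (add_nonneg hab ha) hxb ?_) ?_
    · rwa [add_assoc (a + b)]
    · exact (le_add_of_nonneg_left ha).trans (le_add_of_nonneg_right ha)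
  have hpos : w⁺ + q ≤ p + q + p :=
    add_le_of_disjoint hp₀ hq₀ hq ((sup_le (le_abs_self w) (abs_nonneg w)).trans hw)
  have hneg : w⁻ + p ≤ q + p + q :=
    add_le_of_disjoint hq₀ hp₀ hwp
      (((sup_le (neg_le_abs w) (abs_nonneg w)).trans hw).trans_eq (by abel))
  refine ⟨p - q, abs_sub_eq_add_of_inf_eq_zero (hp q hq), abs_le'.mpr ⟨?_, ?_⟩⟩
  · calc w - (p - q) ≤ w⁺ - (p - q) := sub_le_sub_right (le_posPart w) _
      _ = w⁺ + q - p := by abel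
      _ ≤ p + q := sub_le_iff_le_add.mpr hpos
  · calc -(w - (p - q)) = -w + (p - q) := by abel
      _ ≤ w⁻ + (p - q) := add_le_add_left (neg_le_negPart w) _
      _ = w⁻ + p - q := by abel
      _ ≤ p + q := sub_le_iff_le_add.mpr (hneg.trans_eq (by abel))

theorem HasPrincipalProjections.exists_abs_eq_abs_nsmul_sub_sum_le
    (hE : HasPrincipalProjections E) {u e : E} (hu : |u| ≤ e) (n : ℕ) :
    ∃ v : Fin n → E, (∀ i, |v i| = e) ∧ |n • u - ∑ i, v i| ≤ e := by
  have he : 0 ≤ e := (abs_nonneg u).trans hu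
  induction n with
  | zero => exact ⟨Fin.elim0, fun i ↦ i.elim0, by simpa using he⟩
  | succ n ih =>
    obtain ⟨v, hv, herr⟩ := ih
    obtain ⟨v', hv', herr'⟩ :=
      hE.exists_abs_eq_abs_sub_le he ((abs_add_le _ u).trans (add_le_add herr hu))
    refine ⟨Fin.snoc v v', Fin.lastCases (by simpa using hv') (by simpa using hv), ?_⟩
    convert herr' using 2
    simp only [Fin.sum_univ_castSucc, Fin.snoc_castSucc, Fin.snoc_last, succ_nsmul]
    abel

theorem isLUB_image_abs_eq {F G : Type*} [Lattice F] [AddCommGroup F] [AddLeftMono F]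
    [FunLike G E F] [AddMonoidHomClass G E F] (hE : HasPrincipalProjections E)
    (hF : DedekindComplete F) {T : G} {e : E} {r : F} (hr : IsLUB (T '' Icc (-e) e) r) :
    IsLUB (T '' {v | |v| = e}) r := by
  refine ⟨upperBounds_mono_set (image_mono fun v hv ↦ abs_le_iff_mem_Icc.mp hv.le) hr.1,
    fun U hU ↦ hr.2 ?_⟩
  rintro _ ⟨u, hu, rfl⟩
  rw [← sub_nonpos]
  refine hF.nonpos_of_forall_nsmul_le (c := r) fun n ↦ ?_
  obtain ⟨v, hv, herr⟩ := hE.exists_abs_eq_abs_nsmul_sub_sum_le (abs_le_iff_mem_Icc.mpr hu) n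
  have hsum : ∑ i, T (v i) ≤ n • U := by
    simpa using Finset.sum_le_sum fun i (_ : i ∈ Finset.univ) ↦ hU ⟨v i, hv i, rfl⟩
  calc n • (T u - U) = T (n • u - ∑ i, v i) + (∑ i, T (v i) - n • U) := by
        rw [map_sub, map_nsmul, map_sum, nsmul_sub]; abel
    _ ≤ r + 0 := add_le_add (hr.1 ⟨_, abs_le_iff_mem_Icc.mp herr, rfl⟩) (sub_nonpos.mpr hsum)
    _ = r := add_zero r

end Signs

section Extension

variable {E F : Type*} [Lattice E] [AddCommGroup E] [AddLeftMono E] [AddCommGroup F]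

theorem exists_addMonoidHom_eq_of_nonneg (R : E → F)
    (hR : ∀ a b, 0 ≤ a → 0 ≤ b → R (a + b) = R a + R b) :
    ∃ L : E →+ F, ∀ a, 0 ≤ a → L a = R a := by
  have sub_eq {a b c d : E} (ha : 0 ≤ a) (hb : 0 ≤ b) (hc : 0 ≤ c) (hd : 0 ≤ d)
      (h : a - b = c - d) : R a - R b = R c - R d := by
    rw [sub_eq_sub_iff_add_eq_add] at h ⊢
    rw [← hR a d ha hd, ← hR c b hc hb, h]
  refine ⟨AddMonoidHom.mk' (fun x ↦ R x⁺ - R x⁻) fun x y ↦ ?_, fun a ha ↦ ?_⟩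
  · have hx := posPart_nonneg x
    have hx' := negPart_nonneg x
    have hy := posPart_nonneg y
    have hy' := negPart_nonneg y
    rw [sub_add_sub_comm, ← hR _ _ hx hy, ← hR _ _ hx' hy']
    refine sub_eq (posPart_nonneg _) (negPart_nonneg _) (add_nonneg hx hy) (add_nonneg hx' hy') ?_
    rw [add_sub_add_comm]
    simp only [posPart_sub_negPart]
  · have hR₀ : R 0 = 0 := by simpa using hR 0 0 le_rfl le_rfl
    simp [posPart_of_nonneg ha, negPart_of_nonneg ha, hR₀]

theorem map_smul_of_map_smul_nonneg {𝕜 : Type*} [Ring 𝕜] [LinearOrder 𝕜] [IsOrderedRing 𝕜]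
    [Module 𝕜 E] [Module 𝕜 F] (L : E →+ F)
    (hL : ∀ (c : 𝕜) a, 0 ≤ c → 0 ≤ a → L (c • a) = c • L a) (c : 𝕜) (x : E) :
    L (c • x) = c • L x := by
  have of_nonneg {c : 𝕜} (hc : 0 ≤ c) : L (c • x) = c • L x := by
    rw [← posPart_sub_negPart x, smul_sub, map_sub, map_sub, smul_sub,
      hL c _ hc (posPart_nonneg x), hL c _ hc (negPart_nonneg x)]
  rcases le_total 0 c with hc | hc
  · exact of_nonneg hc
  · simpa using of_nonneg (neg_nonneg.mpr hc)

end Extension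

section RieszKantorovich

variable {𝕜 E F : Type*} [Field 𝕜] [LinearOrder 𝕜] [IsStrictOrderedRing 𝕜]
  [Lattice E] [AddCommGroup E] [AddLeftMono E] [Module 𝕜 E] [PosSMulMono 𝕜 E]
  [Lattice F] [AddCommGroup F] [AddLeftMono F] [Module 𝕜 F] [PosSMulMono 𝕜 F]

theorem exists_linearMap_isLUB_image_Icc (hF : DedekindComplete F) (T : E →ₗ[𝕜] F)
    (hT : ∀ e, 0 ≤ e → BddAbove (T '' Icc (-e) e)) :
    ∃ L : E →ₗ[𝕜] F, ∀ e, 0 ≤ e → IsLUB (T '' Icc (-e) e) (L e) := by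
  have exists_lub (e : E) (he : 0 ≤ e) : ∃ r, IsLUB (T '' Icc (-e) e) r :=
    hF _ ⟨T 0, 0, by simpa using he, rfl⟩ (hT e he)
  choose! R hR using exists_lub
  have R_add (a b : E) (ha : 0 ≤ a) (hb : 0 ≤ b) : R (a + b) = R a + R b := by
    refine (hR _ (add_nonneg ha hb)).unique ?_
    rw [neg_add, ← Icc_add_Icc_eq (neg_le_self ha) (neg_le_self hb), image_add]
    exact (hR a ha).add (hR b hb)
  have R_smul (c : 𝕜) (a : E) (hc : 0 ≤ c) (ha : 0 ≤ a) : R (c • a) = c • R a := by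
    rcases hc.eq_or_lt with rfl | hc
    · simpa using R_add 0 0 le_rfl le_rfl
    · refine (hR _ (smul_nonneg hc.le ha)).unique ?_
      rw [← smul_neg, ← smul_Icc_of_pos hc, image_smul_set]
      exact (OrderIso.smulRight hc).isLUB_image'.mpr (hR a ha)
  obtain ⟨L, hL⟩ := exists_addMonoidHom_eq_of_nonneg R R_add
  have L_smul := map_smul_of_map_smul_nonneg L fun (c : 𝕜) a hc ha ↦ by
    rw [hL _ (smul_nonneg hc ha), hL a ha, R_smul c a hc ha]
  exact ⟨{ L with map_smul' := L_smul }, fun e he ↦ (hL e he).symm ▸ hR e he⟩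

end RieszKantorovich

/-- `S` is a dominant of `T`. The positivity of `S` is encoded in the inequality, see
`Dominates.nonneg`. -/
def Dominates {E F : Type*} [Lattice E] [AddGroup E] [Lattice F] [AddGroup F] (S T : E → F) :
    Prop :=
  ∀ x, |T x| ≤ S |x|

/-- The sums whose supremum computes the exact dominant of `T` at `e`, taken over the finite
families with pairwise disjoint moduli adding up to `e`. -/
def disjointAbsSums {E F : Type*} [Lattice E] [AddCommGroup E] [Lattice F] [AddCommGroup F]
    (T : E → F) (e : E) : Set F :=
  {s | ∃ (n : ℕ) (v : Fin n → E),
    (∀ i j : Fin n, i ≠ j → |v i| ⊓ |v j| = 0) ∧ (∑ i, |v i|) = e ∧ s = ∑ i, |T (v i)|}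

section Dominants

variable {E F G : Type*} [Lattice E] [AddCommGroup E] [Lattice F] [AddCommGroup F]
  [FunLike G E F] [AddMonoidHomClass G E F]

theorem Dominates.nonneg [AddLeftMono E] [AddLeftMono F] {S T : E → F} (hS : Dominates S T)
    {e : E} (he : 0 ≤ e) : 0 ≤ S e := by
  simpa only [abs_of_nonneg he] using (abs_nonneg (T e)).trans (hS e)

theorem Dominates.le_of_mem_Icc [AddLeftMono E] [AddLeftMono F] {S : G} {T : E → F}
    (hS : Dominates S T) {u e : E} (hu : u ∈ Icc (-e) e) : T u ≤ S e := by
  have hmono : S |u| ≤ S e := by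
    rw [← sub_nonneg, ← map_sub]
    exact hS.nonneg (sub_nonneg.mpr (abs_le_iff_mem_Icc.mpr hu))
  exact (le_abs_self _).trans ((hS u).trans hmono)

theorem dominates_of_isLUB_image_Icc [AddLeftMono E] {T : G} {L : E → F}
    (hL : ∀ e, 0 ≤ e → IsLUB (T '' Icc (-e) e) (L e)) : Dominates L T := by
  intro x
  have hle {u : E} (hu : |u| ≤ |x|) : T u ≤ L |x| :=
    (hL _ (abs_nonneg x)).1 ⟨u, abs_le_iff_mem_Icc.mp hu, rfl⟩
  exact abs_le'.mpr ⟨hle le_rfl, map_neg T x ▸ hle (abs_neg x).le⟩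

theorem Dominates.isLUB_disjointAbsSums [AddLeftMono F] {L : G} {T : E → F}
    (hL : Dominates L T) {e : E} (h : IsLUB (T '' {v | |v| = e}) (L e)) :
    IsLUB (disjointAbsSums T e) (L e) := by
  refine ⟨?_, fun U hU ↦ h.2 ?_⟩
  · rintro _ ⟨n, v, -, rfl, rfl⟩
    rw [map_sum]
    exact Finset.sum_le_sum fun i _ ↦ hL (v i)
  · rintro _ ⟨v, hv, rfl⟩
    have hmem : |T v| ∈ disjointAbsSums T e :=
      ⟨1, fun _ ↦ v, fun i j hij ↦ (hij (Subsingleton.elim i j)).elim, by simpa using hv, by simp⟩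
    exact (le_abs_self _).trans (hU hmem)

end Dominants

theorem exists_exact_dominant_general {𝕜 E F : Type*}
    [Field 𝕜] [LinearOrder 𝕜] [IsStrictOrderedRing 𝕜]
    [Lattice E] [AddCommGroup E] [AddLeftMono E] [Module 𝕜 E] [PosSMulMono 𝕜 E]
    [Lattice F] [AddCommGroup F] [AddLeftMono F] [Module 𝕜 F] [PosSMulMono 𝕜 F]
    (hE : HasPrincipalProjections E) (hF : DedekindComplete F) (T : E →ₗ[𝕜] F)
    (hdom : ∃ S : E →ₗ[𝕜] F, Dominates S T) :
    ∃ TT : E →ₗ[𝕜] F, Dominates TT T ∧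
      (∀ S' : E →ₗ[𝕜] F, Dominates S' T → ∀ e, 0 ≤ e → TT e ≤ S' e) ∧
      ∀ e, 0 ≤ e → IsLUB (disjointAbsSums T e) (TT e) := by
  obtain ⟨S, hS⟩ := hdom
  obtain ⟨L, hL⟩ := exists_linearMap_isLUB_image_Icc hF T fun e _ ↦
    ⟨S e, forall_mem_image.mpr fun _ hu ↦ hS.le_of_mem_Icc hu⟩
  have hLT : Dominates L T := dominates_of_isLUB_image_Icc hL
  exact ⟨L, hLT,
    fun S' hS' e he ↦ (hL e he).2 (forall_mem_image.mpr fun _ hu ↦ hS'.le_of_mem_Icc hu),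
    fun e he ↦ hLT.isLUB_disjointAbsSums (isLUB_image_abs_eq hE hF (hL e he))⟩

/-- Let `E`, `F` be Dedekind complete vector lattices and `T : E → F` a dominated
linear operator.  Then `T` has an exact (least) dominant `⟦T⟧`, and for every
`0 ≤ e` the value `⟦T⟧ e` is the least upper bound of all sums `∑ |T vᵢ|` over the
finite families `v₁, …, vₙ` with pairwise disjoint moduli summing to `e`. -/
theorem exists_exact_dominant
    {E F : Type*}
    [Lattice E] [AddCommGroup E] [Module ℝ E]
    [CovariantClass E E (· + ·) (· ≤ ·)] [PosSMulMono ℝ E]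
    [Lattice F] [AddCommGroup F] [Module ℝ F]
    [CovariantClass F F (· + ·) (· ≤ ·)] [PosSMulMono ℝ F]
    (hDedE : ∀ S : Set E, S.Nonempty → BddAbove S → ∃ a : E, IsLUB S a)
    (hDedF : ∀ S : Set F, S.Nonempty → BddAbove S → ∃ a : F, IsLUB S a)
    (T : E →ₗ[ℝ] F)
    (hdom : ∃ S : E →ₗ[ℝ] F, (∀ x : E, 0 ≤ x → 0 ≤ S x) ∧ ∀ x : E, |T x| ≤ S (|x|)) :
    ∃ TT : E →ₗ[ℝ] F,
      (∀ x : E, 0 ≤ x → 0 ≤ TT x) ∧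
      (∀ x : E, |T x| ≤ TT (|x|)) ∧
      (∀ S' : E →ₗ[ℝ] F, (∀ x : E, 0 ≤ x → 0 ≤ S' x) → (∀ x : E, |T x| ≤ S' (|x|)) →
        ∀ e : E, 0 ≤ e → TT e ≤ S' e) ∧
      (∀ e : E, 0 ≤ e →
        IsLUB {s : F | ∃ (n : ℕ) (v : Fin n → E),
          (∀ i j : Fin n, i ≠ j → |v i| ⊓ |v j| = 0) ∧
          (∑ i, |v i|) = e ∧ s = ∑ i, |T (v i)|} (TT e)) := by
  obtain ⟨TT, hTT, hleast, hsums⟩ := exists_exact_dominant_general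
    (DedekindComplete.hasPrincipalProjections hDedE) hDedF T (hdom.imp fun _ hS ↦ hS.2)
  exact ⟨TT, fun _ ↦ hTT.nonneg, hTT, fun S' _ ↦ hleast S', hsums⟩
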